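/- arXiv:2201.09781 — 4 statements merged into one kernel-verified Lean document; each statement's English description precedes it below -/
import Mathlib

section
/- Let d ≥ 1, ε ∈ (0,1], κ ≥ 1, D̃₂ ≥ 1, δ ∈ [0,1], 0 ≤ s < 1, set w(x) := (1+|x|²)^{δ/2} and q_m := D̃₂^{2m}(m!)^s for m ∈ ℕ₀. Let f ∈ C^∞(ℝ^d), and let Q ⊂ ℝ^d be an open Euclidean ball of positive radius which is 'good', i.e. for all m ∈ ℕ₀ one has Σ_{|β|=m} (1/β!) ‖w^m ∂^β f‖²_{L²(Q)} ≤ (2κ/ε) · (2^{m+1} d^m q_m² / m!) · ‖f‖²_{L²(Q)}. Then there exists a point x₀ ∈ Q such that for all m ∈ ℕ₀ and all multi-indices β ∈ ℕ₀^d with |β| = m one has |∂^β f(x₀)| ≤ (2κ/ε)^{1/2} · 2^{m+1} d^{m/2} · C(m)^{1/2} · ‖f‖_{L²(Q)}/√|Q|, where C(m) := q_m² · sup_{x ∈ Q} w(x)^{−2m}. -/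
open MeasureTheory
open scoped ENNReal

/-- The partial derivative in the `i`-th coordinate direction. -/
noncomputable def pderivE {d : ℕ} (i : Fin d) (f : EuclideanSpace ℝ (Fin d) → ℝ) :
    EuclideanSpace ℝ (Fin d) → ℝ :=
  fun x => fderiv ℝ f x (EuclideanSpace.single i 1)

/-- The multi-index partial derivative `∂^β f` for `β ∈ ℕ₀^d`. -/
noncomputable def mderiv {d : ℕ} (β : Fin d → ℕ) (f : EuclideanSpace ℝ (Fin d) → ℝ) :
    EuclideanSpace ℝ (Fin d) → ℝ :=
  (List.finRange d).foldr (fun i g => (pderivE i)^[β i] g) f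

/-!
For each order `m`, divide the density `∑_{|β| = m} |w^m ∂^β f|² / β!` by its mean over `Q`, and
sum the quotients with the weights `2^{-(m+1)}`: this is a single nonnegative function whose mean
over `Q` is at most `1`. At a point `x₀ ∈ Q` where it does not exceed its mean, every summand is at
most `1`, so all derivatives are controlled at the same point, at the cost of a factor `2^{m+1}` in
the bound for the square. Since `β! ≤ m!` for `|β| = m`, the denominator `m!` in the definition of
a good ball absorbs the factor `1 / β!`.
-/

section Selection

variable {α ι : Type*} {mα : MeasurableSpace α} {μ : Measure α} {s : Set α}

theorem laverage_const_mul (c : ℝ≥0∞) {g : α → ℝ≥0∞} (hg : AEMeasurable g μ) :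
    ⨍⁻ x, c * g x ∂μ = c * ⨍⁻ x, g x ∂μ :=
  lintegral_const_mul'' c (hg.smul_measure _)

theorem laverage_inv_mul_laverage_le_one {g : α → ℝ≥0∞} (hg : AEMeasurable g μ) :
    ⨍⁻ x, (⨍⁻ y, g y ∂μ)⁻¹ * g x ∂μ ≤ 1 := by
  rw [laverage_const_mul _ hg]
  -- A zero mean is harmless: in `ℝ≥0∞`, `0⁻¹ = ∞` and `∞ * 0 = 0`.
  exact ENNReal.inv_mul_le_one _

theorem laverage_tsum [Countable ι] {g : ι → α → ℝ≥0∞} (hg : ∀ i, AEMeasurable (g i) μ) :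
    ⨍⁻ x, ∑' i, g i x ∂μ = ∑' i, ⨍⁻ x, g i x ∂μ :=
  lintegral_tsum fun i => (hg i).smul_measure _

theorem exists_mem_forall_le_inv_mul_setLAverage [Countable ι] (hs₀ : μ s ≠ 0) (hs : μ s ≠ ∞)
    {g : ι → α → ℝ≥0∞} (hg : ∀ i, AEMeasurable (g i) (μ.restrict s))
    {p : ι → ℝ≥0∞} (hp₀ : ∀ i, p i ≠ 0) (hp : ∑' i, p i ≤ 1) :
    ∃ x ∈ s, ∀ i, g i x ≤ (p i)⁻¹ * ⨍⁻ y in s, g i y ∂μ := by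
  set a : ι → ℝ≥0∞ := fun i => ⨍⁻ y in s, g i y ∂μ
  have h_meas (i : ι) : AEMeasurable (fun x => (a i)⁻¹ * g i x) (μ.restrict s) :=
    (hg i).const_mul _
  have h_sum_meas : AEMeasurable (fun x => ∑' i, p i * ((a i)⁻¹ * g i x)) (μ.restrict s) :=
    .tsum fun i => (h_meas i).const_mul (p i)
  obtain ⟨x, hx, hx_le⟩ := exists_le_setLAverage hs₀ hs h_sum_meas
  have h_mean : ⨍⁻ y in s, ∑' i, p i * ((a i)⁻¹ * g i y) ∂μ ≤ 1 :=
    calc ⨍⁻ y in s, ∑' i, p i * ((a i)⁻¹ * g i y) ∂μ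
        = ∑' i, p i * ⨍⁻ y in s, (a i)⁻¹ * g i y ∂μ := by
          rw [laverage_tsum fun i => (h_meas i).const_mul (p i)]
          exact tsum_congr fun i => laverage_const_mul (p i) (h_meas i)
      _ ≤ ∑' i, p i := ENNReal.tsum_le_tsum fun i =>
          mul_le_of_le_one_right' (laverage_inv_mul_laverage_le_one (hg i))
      _ ≤ 1 := hp
  refine ⟨x, hx, fun i => ?_⟩
  have hp_top : p i ≠ ∞ := ne_top_of_le_ne_top ENNReal.one_ne_top ((ENNReal.le_tsum i).trans hp)
  have h_term : p i * ((a i)⁻¹ * g i x) ≤ 1 := (ENNReal.le_tsum i).trans (hx_le.trans h_mean)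
  rwa [ENNReal.mul_le_iff_le_inv (hp₀ i) hp_top, mul_one, mul_comm, ← div_eq_mul_inv,
    ENNReal.div_le_iff_le_mul (.inr (ENNReal.inv_ne_top.2 (hp₀ i)))
      (.inr (ENNReal.inv_ne_zero.2 hp_top))] at h_term

end Selection

theorem eLpNorm_two_sq_eq_lintegral {α E : Type*} {mα : MeasurableSpace α} [ENorm E]
    (f : α → E) (μ : Measure α) : eLpNorm f 2 μ ^ 2 = ∫⁻ x, ‖f x‖ₑ ^ 2 ∂μ := by
  simpa using eLpNorm_nnreal_pow_eq_lintegral (μ := μ) (f := f) (p := 2) two_ne_zero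

theorem memLp_restrict_of_continuous_of_isBounded {X E : Type*} [PseudoMetricSpace X]
    [ProperSpace X] [MeasurableSpace X] [OpensMeasurableSpace X] [NormedAddCommGroup E]
    [SecondCountableTopologyEither X E] {μ : Measure X} [IsFiniteMeasureOnCompacts μ]
    {f : X → E} {s : Set X} (hf : Continuous f) (hs : Bornology.IsBounded s) (p : ℝ≥0∞) :
    MemLp f p (μ.restrict s) := by
  have h_compact : IsCompact (closure s) := hs.isCompact_closure
  obtain ⟨C, hC⟩ := h_compact.exists_bound_of_continuousOn hf.continuousOn
  have : IsFiniteMeasure (μ.restrict (closure s)) :=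
    isFiniteMeasure_restrict.2 h_compact.measure_lt_top.ne
  refine MemLp.mono_measure (Measure.restrict_mono_set μ subset_closure) ?_
  exact .of_bound hf.aestronglyMeasurable C
    ((ae_restrict_iff' isClosed_closure.measurableSet).2 (.of_forall hC))

section GoodSet

variable {d : ℕ} {f w : EuclideanSpace ℝ (Fin d) → ℝ} {Q : Set (EuclideanSpace ℝ (Fin d))}

theorem measurable_pderivE (i : Fin d) (f : EuclideanSpace ℝ (Fin d) → ℝ) :
    Measurable (pderivE i f) :=
  measurable_fderiv_apply_const ℝ f _

theorem measurable_mderiv (β : Fin d → ℕ) (hf : Measurable f) : Measurable (mderiv β f) :=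
  List.foldrRecOn _ _ hf fun _ hg i _ =>
    Function.Iterate.rec _ hg (fun g _ => measurable_pderivE i g) _

/-- The density `∑_{|β| = m} |w^m ∂^β f|² / β!`, whose integral over `Q` is the quantity bounded
in the definition of a good ball. It is `ℝ≥0∞`-valued so that it can be integrated and summed over
`m` without integrability side conditions. -/
noncomputable def derivDensity (w f : EuclideanSpace ℝ (Fin d) → ℝ) (m : ℕ)
    (x : EuclideanSpace ℝ (Fin d)) : ℝ≥0∞ :=
  ∑ β ∈ Finset.Nat.antidiagonalTuple d m,
    ((∏ i, (β i).factorial : ℕ) : ℝ≥0∞)⁻¹ * ‖w x ^ m * mderiv β f x‖ₑ ^ 2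

theorem aemeasurable_enorm_weight_mul_mderiv_sq {μ : Measure (EuclideanSpace ℝ (Fin d))}
    (hw : AEMeasurable w μ) (hf : Measurable f) (m : ℕ) (β : Fin d → ℕ) :
    AEMeasurable (fun x => ‖w x ^ m * mderiv β f x‖ₑ ^ 2) μ :=
  (((hw.pow_const m).mul (measurable_mderiv β hf).aemeasurable).enorm).pow_const 2

theorem aemeasurable_derivDensity {μ : Measure (EuclideanSpace ℝ (Fin d))}
    (hw : AEMeasurable w μ) (hf : Measurable f) (m : ℕ) :
    AEMeasurable (derivDensity w f m) μ :=
  Finset.aemeasurable_fun_sum _ fun β _ =>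
    (aemeasurable_enorm_weight_mul_mderiv_sq hw hf m β).const_mul _

theorem lintegral_derivDensity {μ : Measure (EuclideanSpace ℝ (Fin d))}
    (hw : AEMeasurable w μ) (hf : Measurable f) (m : ℕ) :
    ∫⁻ x, derivDensity w f m x ∂μ = ∑ β ∈ Finset.Nat.antidiagonalTuple d m,
      ((∏ i, (β i).factorial : ℕ) : ℝ≥0∞)⁻¹ *
        eLpNorm (fun x => w x ^ m * mderiv β f x) 2 μ ^ 2 := by
  have h_meas (β : Fin d → ℕ) := aemeasurable_enorm_weight_mul_mderiv_sq hw hf m β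
  unfold derivDensity
  rw [lintegral_finsetSum' _ fun β _ => (h_meas β).const_mul _]
  refine Finset.sum_congr rfl fun β _ => ?_
  rw [lintegral_const_mul'' _ (h_meas β), eLpNorm_two_sq_eq_lintegral]

theorem enorm_weight_mul_mderiv_sq_le_factorial_mul_derivDensity
    (w f : EuclideanSpace ℝ (Fin d) → ℝ) (β : Fin d → ℕ) (x : EuclideanSpace ℝ (Fin d)) :
    ‖w x ^ (∑ i, β i) * mderiv β f x‖ₑ ^ 2 ≤
      (∑ i, β i).factorial * derivDensity w f (∑ i, β i) x := by
  set m := ∑ i, β i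
  set b := ∏ i, (β i).factorial
  have hb : b ≠ 0 := Finset.prod_ne_zero_iff.2 fun i _ => (β i).factorial_ne_zero
  have hb_le : b ≤ m.factorial :=
    Nat.le_of_dvd m.factorial_pos (Nat.prod_factorial_dvd_factorial_sum Finset.univ β)
  calc ‖w x ^ m * mderiv β f x‖ₑ ^ 2
      = b * ((b : ℝ≥0∞)⁻¹ * ‖w x ^ m * mderiv β f x‖ₑ ^ 2) := by
        rw [ENNReal.mul_inv_cancel_left (by exact_mod_cast hb) (ENNReal.natCast_ne_top b)]
    _ ≤ m.factorial * derivDensity w f m x := by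
        gcongr
        exact Finset.single_le_sum
          (f := fun γ : Fin d → ℕ => ((∏ i, (γ i).factorial : ℕ) : ℝ≥0∞)⁻¹ *
            ‖w x ^ m * mderiv γ f x‖ₑ ^ 2)
          (fun _ _ => zero_le) (Finset.Nat.mem_antidiagonalTuple.2 rfl)

theorem exists_mem_forall_enorm_weight_mul_mderiv_sq_le (hQ₀ : volume Q ≠ 0) (hQ : volume Q ≠ ∞)
    (hw : AEMeasurable w (volume.restrict Q)) (hf : Measurable f) {A : ℕ → ℝ≥0∞}
    (hA : ∀ m, ∑ β ∈ Finset.Nat.antidiagonalTuple d m,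
      ((∏ i, (β i).factorial : ℕ) : ℝ≥0∞)⁻¹ *
        eLpNorm (fun x => w x ^ m * mderiv β f x) 2 (volume.restrict Q) ^ 2 ≤ A m) :
    ∃ x₀ ∈ Q, ∀ (m : ℕ) (β : Fin d → ℕ), ∑ i, β i = m →
      ‖w x₀ ^ m * mderiv β f x₀‖ₑ ^ 2 ≤ m.factorial * (2 ^ (m + 1) * (A m / volume Q)) := by
  have h_geom : ∑' m : ℕ, (2⁻¹ : ℝ≥0∞) ^ (m + 1) ≤ 1 := by
    rw [ENNReal.tsum_geometric_add_one, ENNReal.one_sub_inv_two]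
    exact ENNReal.mul_inv_le_one _
  obtain ⟨x₀, hx₀, hle⟩ := exists_mem_forall_le_inv_mul_setLAverage hQ₀ hQ
    (aemeasurable_derivDensity hw hf) (fun m => pow_ne_zero _ (by simp)) h_geom
  refine ⟨x₀, hx₀, ?_⟩
  rintro m β rfl
  refine (enorm_weight_mul_mderiv_sq_le_factorial_mul_derivDensity w f β x₀).trans ?_
  gcongr
  refine (hle _).trans ?_
  rw [ENNReal.inv_pow, inv_inv, setLAverage_eq, lintegral_derivDensity hw hf]
  gcongr
  exact hA _

/-- The set `Q` is good for `f`: the derivatives of `f`, weighted by powers of `w`, satisfy on `Q`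
the `L²` bounds with constant `M` and growth sequence `q` (for the good balls of the paper,
`M = 2κ/ε`). The `L²` norms are `ℝ≥0∞`-valued, so an infinite one on the left is not discarded. -/
def IsGoodSet (w f : EuclideanSpace ℝ (Fin d) → ℝ) (M : ℝ) (q : ℕ → ℝ)
    (Q : Set (EuclideanSpace ℝ (Fin d))) : Prop :=
  ∀ m : ℕ,
    ∑ β ∈ Finset.Nat.antidiagonalTuple d m,
        ((∏ i, (β i).factorial : ℕ) : ℝ≥0∞)⁻¹ *
          eLpNorm (fun x => w x ^ m * mderiv β f x) 2 (volume.restrict Q) ^ 2 ≤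
      ENNReal.ofReal (M * (2 ^ (m + 1) * d ^ m * q m ^ 2 / m.factorial)) *
        eLpNorm f 2 (volume.restrict Q) ^ 2

theorem factorial_mul_goodSet_bound_eq_sq (d m : ℕ) {M : ℝ} (hM : 0 ≤ M) (c n : ℝ) {V : ℝ}
    (hV : 0 ≤ V) :
    m.factorial * (2 ^ (m + 1) *
        (M * (2 ^ (m + 1) * d ^ m * c ^ 2 / m.factorial) * n ^ 2 / V)) =
      (√M * 2 ^ (m + 1) * (d : ℝ) ^ ((m : ℝ) / 2) * |c| * (n / √V)) ^ 2 := by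
  have h_fac : (m.factorial : ℝ) ≠ 0 := by exact_mod_cast m.factorial_ne_zero
  have h_dim : ((d : ℝ) ^ ((m : ℝ) / 2)) ^ 2 = (d : ℝ) ^ m := by
    rw [← Real.rpow_mul_natCast d.cast_nonneg, Nat.cast_ofNat, div_mul_cancel₀ _ two_ne_zero,
      Real.rpow_natCast]
  simp only [mul_pow, div_pow, h_dim, Real.sq_sqrt hM, Real.sq_sqrt hV, sq_abs]
  field_simp

theorem exists_mem_forall_abs_weight_mul_mderiv_le (hQ₀ : volume Q ≠ 0) (hQ : volume Q ≠ ∞)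
    (hw : AEMeasurable w (volume.restrict Q)) (hf : Measurable f)
    (hfQ : MemLp f 2 (volume.restrict Q)) {M : ℝ} (hM : 0 ≤ M) {q : ℕ → ℝ}
    (hGood : IsGoodSet w f M q Q) :
    ∃ x₀ ∈ Q, ∀ (m : ℕ) (β : Fin d → ℕ), ∑ i, β i = m →
      |w x₀ ^ m * mderiv β f x₀| ≤
        √M * 2 ^ (m + 1) * (d : ℝ) ^ ((m : ℝ) / 2) * |q m| *
          ((eLpNorm f 2 (volume.restrict Q)).toReal / √(volume Q).toReal) := by
  obtain ⟨x₀, hx₀, hle⟩ := exists_mem_forall_enorm_weight_mul_mderiv_sq_le hQ₀ hQ hw hf hGood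
  refine ⟨x₀, hx₀, fun m β hβ => abs_le_of_sq_le_sq ?_ (by positivity)⟩
  have h_top : eLpNorm f 2 (volume.restrict Q) ≠ ∞ := hfQ.eLpNorm_ne_top
  have h_real := ENNReal.toReal_mono (by finiteness) (hle m β hβ)
  have h_nonneg : 0 ≤ M * (2 ^ (m + 1) * d ^ m * q m ^ 2 / m.factorial) := by positivity
  simpa only [ENNReal.toReal_mul, ENNReal.toReal_div, ENNReal.toReal_pow, toReal_enorm,
    ENNReal.toReal_natCast, ENNReal.toReal_ofNat, ENNReal.toReal_ofReal h_nonneg, Real.norm_eq_abs,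
    sq_abs, factorial_mul_goodSet_bound_eq_sq d m hM _ _ ENNReal.toReal_nonneg] using h_real

theorem inv_pow_le_iSup_inv_pow {α : Type*} {v : α → ℝ} {Q : Set α} {c : ℝ} (hc : 0 < c)
    (hv : ∀ x ∈ Q, c ≤ v x) (n : ℕ) {x : α} (hx : x ∈ Q) :
    (v x ^ n)⁻¹ ≤ ⨆ y : Q, (v y ^ n)⁻¹ := by
  refine le_ciSup (f := fun y : Q => (v y ^ n)⁻¹) ⟨(c ^ n)⁻¹, ?_⟩ ⟨x, hx⟩
  rintro _ ⟨y, rfl⟩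
  have := hv y y.2
  dsimp only
  gcongr

theorem pointwise_estimate_on_good_ball_general (hQ₀ : volume Q ≠ 0) (hQ : volume Q ≠ ∞)
    {c : ℝ} (hc : 0 < c) (hcw : ∀ x ∈ Q, c ≤ w x) (hw : AEMeasurable w (volume.restrict Q))
    (hf : ContDiff ℝ (⊤ : ℕ∞) f) (hfQ : MemLp f 2 (volume.restrict Q))
    {M : ℝ} (hM : 0 ≤ M) {q : ℕ → ℝ}
    (hGood : IsGoodSet w f M q Q) :
    ∃ x₀ ∈ Q, ∀ (m : ℕ) (β : Fin d → ℕ), ∑ i, β i = m →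
      |mderiv β f x₀| ≤
        √M * 2 ^ (m + 1) * (d : ℝ) ^ ((m : ℝ) / 2) *
          √(q m ^ 2 * ⨆ x : Q, (w x ^ (2 * m))⁻¹) *
          ((eLpNorm f 2 (volume.restrict Q)).toReal / √(volume Q).toReal) := by
  obtain ⟨x₀, hx₀, hle⟩ := exists_mem_forall_abs_weight_mul_mderiv_le hQ₀ hQ hw
    hf.continuous.measurable hfQ hM hGood
  refine ⟨x₀, hx₀, fun m β hβ => ?_⟩
  have hw_pos : 0 < w x₀ ^ m := pow_pos (hc.trans_le (hcw x₀ hx₀)) m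
  have h_weight : |q m| * (w x₀ ^ m)⁻¹ ≤ √(q m ^ 2 * ⨆ x : Q, (w x ^ (2 * m))⁻¹) := by
    refine Real.le_sqrt_of_sq_le ?_
    rw [mul_pow, sq_abs, inv_pow, ← pow_mul, mul_comm m 2]
    gcongr
    exact inv_pow_le_iSup_inv_pow hc hcw (2 * m) hx₀
  calc |mderiv β f x₀| = (w x₀ ^ m)⁻¹ * |w x₀ ^ m * mderiv β f x₀| := by
        rw [abs_mul, abs_of_pos hw_pos, inv_mul_cancel_left₀ hw_pos.ne']
    _ ≤ (w x₀ ^ m)⁻¹ * (√M * 2 ^ (m + 1) * (d : ℝ) ^ ((m : ℝ) / 2) * |q m| *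
          ((eLpNorm f 2 (volume.restrict Q)).toReal / √(volume Q).toReal)) := by
        gcongr
        exact hle m β hβ
    _ = √M * 2 ^ (m + 1) * (d : ℝ) ^ ((m : ℝ) / 2) * (|q m| * (w x₀ ^ m)⁻¹) *
          ((eLpNorm f 2 (volume.restrict Q)).toReal / √(volume Q).toReal) := by ring
    _ ≤ √M * 2 ^ (m + 1) * (d : ℝ) ^ ((m : ℝ) / 2) *
          √(q m ^ 2 * ⨆ x : Q, (w x ^ (2 * m))⁻¹) *
          ((eLpNorm f 2 (volume.restrict Q)).toReal / √(volume Q).toReal) := by gcongr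

end GoodSet

/-- Lemma 2.2 (pointwise estimates for the derivatives of `f` at a suitable point of a
good ball). -/
theorem pointwise_estimate_on_good_ball
    (d : ℕ) (hd : 1 ≤ d) (ε κ D₂' δ s : ℝ)
    (hε0 : 0 < ε) (hε1 : ε ≤ 1) (hκ : 1 ≤ κ) (hD₂' : 1 ≤ D₂')
    (hδ0 : 0 ≤ δ) (hδ1 : δ ≤ 1) (hs0 : 0 ≤ s) (hs1 : s < 1)
    -- the weight `w` and the sequence `q_m`
    (w : EuclideanSpace ℝ (Fin d) → ℝ) (hw : ∀ x, w x = (1 + ‖x‖ ^ 2) ^ (δ / 2))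
    (q : ℕ → ℝ) (hq : ∀ m, q m = D₂' ^ (2 * m) * (m.factorial : ℝ) ^ s)
    (f : EuclideanSpace ℝ (Fin d) → ℝ) (hf : ContDiff ℝ (⊤ : ℕ∞) f)
    -- the good ball `Q`
    (y : EuclideanSpace ℝ (Fin d)) (r : ℝ) (hr : 0 < r)
    (Q : Set (EuclideanSpace ℝ (Fin d))) (hQ : Q = Metric.ball y r)
    (hGood : ∀ m : ℕ,
      ∑ β ∈ Finset.Nat.antidiagonalTuple d m,
          (((∏ i, (β i).factorial : ℕ) : ℝ≥0∞))⁻¹ *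
            (eLpNorm (fun x => w x ^ m * mderiv β f x) 2 (volume.restrict Q)) ^ 2 ≤
        ENNReal.ofReal (2 * κ / ε * (2 ^ (m + 1) * d ^ m * q m ^ 2 / (m.factorial : ℝ))) *
          (eLpNorm f 2 (volume.restrict Q)) ^ 2) :
    ∃ x₀ ∈ Q, ∀ (m : ℕ) (β : Fin d → ℕ), (∑ i, β i) = m →
      |mderiv β f x₀| ≤
        Real.sqrt (2 * κ / ε) * 2 ^ (m + 1) * (d : ℝ) ^ ((m : ℝ) / 2) *
          Real.sqrt (q m ^ 2 * ⨆ x : Q, (w x ^ (2 * m))⁻¹) *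
          ((eLpNorm f 2 (volume.restrict Q)).toReal / Real.sqrt (volume Q).toReal) := by
  obtain rfl : w = fun x => (1 + ‖x‖ ^ 2) ^ (δ / 2) := funext hw
  subst hQ
  exact pointwise_estimate_on_good_ball_general (Metric.measure_ball_pos volume y hr).ne'
    measure_ball_lt_top.ne one_pos
    (fun x _ => Real.one_le_rpow (le_add_of_nonneg_right (sq_nonneg ‖x‖)) (by positivity))
    (by fun_prop) hf
    (memLp_restrict_of_continuous_of_isBounded hf.continuous Metric.isBounded_ball 2)
    (by positivity) hGood
end

section
/- Let d ≥ 1 and let f ∈ C^∞(ℝ^d) be such that ‖∂^β f‖_{L²(ℝ^d)} ≤ C₁ C₂^{|β|} β! for all multi-indices β ∈ ℕ₀^d, with some constants C₁, C₂ > 0. Then f is (real-)analytic on ℝ^d. -/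
open MeasureTheory
open scoped ENNReal

/-!
A Sobolev inequality turns the `L²` bounds into pointwise ones. On the line,
`|g x|² ≤ 2 ∫ (|g|² + |g'|²)`; using this in one coordinate after the other bounds `|g x|²` by
`2^d` times the sum of `‖∂^t g‖²` over all `t ⊆ {1, …, d}`, where `∂^t` differentiates once in each
coordinate of `t`. For `g = ∂^β f` this costs at most one further derivative per coordinate, and
since `(m + 1)! ≤ 2^m m!` the bound keeps its form: `|∂^β f x| ≤ A (2 C₂)^{|β|} β!`. Expanding
vectors in the standard basis gives `‖D^n f x‖ ≤ A (2 d C₂)^n n!` uniformly in `x`, so the Taylor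
remainders decay geometrically on balls of a fixed radius.
-/

open Filter Metric Set
open scoped ContDiff Nat NNReal Topology

section Taylor

variable {E F : Type*} [NormedAddCommGroup E] [NormedSpace ℝ E] [NormedAddCommGroup F]
  [NormedSpace ℝ F] {f : E → F} {x y : E} {A B : ℝ}

/-- The Taylor series `∑ₙ D^n f(x) / n!` of `f` at `x`, in contrast to Mathlib's `ftaylorSeries`,
whose terms are the derivatives `D^n f(x)` without the factorials. -/
noncomputable def taylorSeries (f : E → F) (x : E) : FormalMultilinearSeries ℝ E F :=
  fun n => (n ! : ℝ)⁻¹ • iteratedFDeriv ℝ n f x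

theorem norm_taylorSeries_le {n : ℕ} (h : ‖iteratedFDeriv ℝ n f x‖ ≤ A * B ^ n * n !) :
    ‖taylorSeries f x n‖ ≤ A * B ^ n := by
  rw [taylorSeries, norm_smul, norm_inv, Real.norm_natCast, inv_mul_le_iff₀ (by positivity)]
  linarith

theorem norm_sub_taylorSeries_partialSum_le [CompleteSpace F] {n : ℕ} {M : ℝ}
    (hf : ∀ t ∈ Icc (0 : ℝ) 1, ContDiffAt ℝ (n + 1) f (x + t • y))
    (hM : ∀ t ∈ Icc (0 : ℝ) 1, ‖iteratedFDeriv ℝ (n + 1) f (x + t • y)‖ ≤ M) :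
    ‖f (x + y) - (taylorSeries f x).partialSum (n + 1) y‖ ≤ M * ‖y‖ ^ (n + 1) / (n + 1)! := by
  have remainder_eq : f (x + y) - (taylorSeries f x).partialSum (n + 1) y = (n ! : ℝ)⁻¹ •
      ∫ t in 0..1, (1 - t) ^ n • iteratedFDeriv ℝ (n + 1) f (x + t • y) (fun _ ↦ y) := by
    rw [map_add_eq_sum_add_integral_iteratedFDeriv hf]
    exact add_sub_cancel_left _ _
  have integrand_le : ∀ t ∈ Ioc (0 : ℝ) 1,
      ‖(1 - t) ^ n • iteratedFDeriv ℝ (n + 1) f (x + t • y) (fun _ ↦ y)‖ ≤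
        (1 - t) ^ n * (M * ‖y‖ ^ (n + 1)) := by
    intro t ht
    have ht' : 0 ≤ 1 - t := sub_nonneg.2 ht.2
    rw [norm_smul, Real.norm_of_nonneg (by positivity)]
    gcongr
    calc ‖iteratedFDeriv ℝ (n + 1) f (x + t • y) (fun _ ↦ y)‖
        ≤ ‖iteratedFDeriv ℝ (n + 1) f (x + t • y)‖ * ‖y‖ ^ (n + 1) := by
          simpa using (iteratedFDeriv ℝ (n + 1) f (x + t • y)).le_opNorm (fun _ => y)
      _ ≤ M * ‖y‖ ^ (n + 1) := by gcongr; exact hM t ⟨ht.1.le, ht.2⟩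
  have integral_weight : ∫ t in (0 : ℝ)..1, (1 - t) ^ n = 1 / (n + 1) := by
    simp [intervalIntegral.integral_comp_sub_left (fun t : ℝ => t ^ n) 1]
  have integral_le := intervalIntegral.norm_integral_le_of_norm_le zero_le_one
    (Eventually.of_forall integrand_le)
    (Continuous.intervalIntegrable (μ := volume) (by fun_prop) 0 1)
  rw [intervalIntegral.integral_mul_const, integral_weight] at integral_le
  rw [remainder_eq, norm_smul, norm_inv, Real.norm_natCast, inv_mul_le_iff₀ (by positivity)]
  refine integral_le.trans_eq ?_
  rw [Nat.factorial_succ]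
  push_cast
  field_simp

theorem le_radius_taylorSeries {r : ℝ≥0} (hB : 0 ≤ B) (hBr : B * r ≤ 1)
    (hbound : ∀ n : ℕ, ‖iteratedFDeriv ℝ n f x‖ ≤ A * B ^ n * n !) :
    r ≤ (taylorSeries f x).radius := by
  have hA : 0 ≤ A := (norm_nonneg _).trans (by simpa using hbound 0)
  refine (taylorSeries f x).le_radius_of_bound A fun n => ?_
  calc ‖taylorSeries f x n‖ * (r : ℝ) ^ n
      ≤ A * B ^ n * (r : ℝ) ^ n := by gcongr; exact norm_taylorSeries_le (hbound n)
    _ = A * (B * r) ^ n := by rw [mul_assoc, mul_pow]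
    _ ≤ A := mul_le_of_le_one_right hA (pow_le_one₀ (by positivity) hBr)

theorem hasSum_taylorSeries [CompleteSpace F] (hB : 0 ≤ B) (hBy : B * ‖y‖ < 1)
    (hf : ∀ t ∈ Icc (0 : ℝ) 1, ContDiffAt ℝ ∞ f (x + t • y))
    (hbound : ∀ t ∈ Icc (0 : ℝ) 1, ∀ n : ℕ,
      ‖iteratedFDeriv ℝ n f (x + t • y)‖ ≤ A * B ^ n * n !) :
    HasSum (fun n => taylorSeries f x n fun _ => y) (f (x + y)) := by
  have bound_at (n : ℕ) : ‖iteratedFDeriv ℝ n f x‖ ≤ A * B ^ n * n ! := by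
    simpa only [zero_smul, add_zero] using hbound 0 (left_mem_Icc.2 zero_le_one) n
  have term_le (n : ℕ) : ‖taylorSeries f x n fun _ => y‖ ≤ A * (B * ‖y‖) ^ n :=
    calc ‖taylorSeries f x n fun _ => y‖
        ≤ ‖taylorSeries f x n‖ * ‖y‖ ^ n := by
          simpa using (taylorSeries f x n).le_opNorm (fun _ => y)
      _ ≤ A * B ^ n * ‖y‖ ^ n := by gcongr; exact norm_taylorSeries_le (bound_at n)
      _ = A * (B * ‖y‖) ^ n := by rw [mul_assoc, mul_pow]
  have remainder_le (n : ℕ) :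
      ‖f (x + y) - (taylorSeries f x).partialSum (n + 1) y‖ ≤ A * (B * ‖y‖) ^ (n + 1) :=
    calc ‖f (x + y) - (taylorSeries f x).partialSum (n + 1) y‖
        ≤ A * B ^ (n + 1) * (n + 1)! * ‖y‖ ^ (n + 1) / (n + 1)! :=
          norm_sub_taylorSeries_partialSum_le
            (fun t ht => (hf t ht).of_le (by exact_mod_cast le_top))
            (fun t ht => hbound t ht (n + 1))
      _ = A * (B * ‖y‖) ^ (n + 1) := by rw [mul_pow]; field_simp
  have geometric : Summable fun n : ℕ => A * (B * ‖y‖) ^ n :=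
    (summable_geometric_of_lt_one (by positivity) hBy).mul_left A
  rw [(Summable.of_norm_bounded geometric term_le).hasSum_iff_tendsto_nat,
    ← tendsto_add_atTop_iff_nat 1, tendsto_iff_norm_sub_tendsto_zero]
  refine squeeze_zero (fun _ => norm_nonneg _) (fun n => ?_)
    ((tendsto_add_atTop_iff_nat 1).2 geometric.tendsto_atTop_zero)
  rw [norm_sub_rev]
  exact remainder_le n

theorem hasFPowerSeriesOnBall_taylorSeries [CompleteSpace F] {r : ℝ≥0} (hr : 0 < r) (hB : 0 < B)
    (hBr : B * r ≤ 1) (hf : ∀ y ∈ ball x r, ContDiffAt ℝ ∞ f y)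
    (hbound : ∀ y ∈ ball x r, ∀ n : ℕ, ‖iteratedFDeriv ℝ n f y‖ ≤ A * B ^ n * n !) :
    HasFPowerSeriesOnBall f (taylorSeries f x) x r := by
  refine ⟨le_radius_taylorSeries hB.le hBr (hbound x (mem_ball_self hr)), by exact_mod_cast hr,
    fun {y} hy => ?_⟩
  have hyr : ‖y‖ < r := by
    rw [mem_eball, edist_zero_right, enorm_eq_nnnorm] at hy
    exact_mod_cast hy
  have segment_mem : ∀ t ∈ Icc (0 : ℝ) 1, x + t • y ∈ ball x (r : ℝ) := by
    intro t ht
    rw [mem_ball_iff_norm, add_sub_cancel_left, norm_smul, Real.norm_of_nonneg ht.1]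
    exact (mul_le_of_le_one_left (norm_nonneg y) ht.2).trans_lt hyr
  exact hasSum_taylorSeries hB.le ((mul_lt_mul_of_pos_left hyr hB).trans_le hBr)
    (fun t ht => hf _ (segment_mem t ht)) (fun t ht => hbound _ (segment_mem t ht))

theorem analyticAt_of_norm_iteratedFDeriv_le [CompleteSpace F] (hB : 0 < B)
    (hf : ∀ᶠ y in 𝓝 x, ContDiffAt ℝ ∞ f y)
    (hbound : ∀ᶠ y in 𝓝 x, ∀ n : ℕ, ‖iteratedFDeriv ℝ n f y‖ ≤ A * B ^ n * n !) :
    AnalyticAt ℝ f x := by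
  obtain ⟨ε, hε, hball⟩ := eventually_nhds_iff_ball.1 (hf.and hbound)
  let r : ℝ≥0 := ⟨min ε B⁻¹, by positivity⟩
  have hr : 0 < r := lt_min hε (inv_pos.2 hB)
  have hBr : B * r ≤ 1 :=
    (mul_le_mul_of_nonneg_left (min_le_right ε B⁻¹) hB.le).trans_eq (mul_inv_cancel₀ hB.ne')
  have hsub : ball x (r : ℝ) ⊆ ball x ε := ball_subset_ball (min_le_left ε B⁻¹)
  exact (hasFPowerSeriesOnBall_taylorSeries hr hB hBr (fun y hy => (hball y (hsub hy)).1)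
    fun y hy => (hball y (hsub hy)).2).analyticAt

end Taylor

theorem multilinear_opNorm_le_of_orthonormalBasis {𝕜 ι κ E F : Type*} [RCLike 𝕜] [Fintype ι]
    [Fintype κ] [NormedAddCommGroup E] [InnerProductSpace 𝕜 E] [NormedAddCommGroup F]
    [NormedSpace 𝕜 F] (b : OrthonormalBasis ι 𝕜 E)
    (T : ContinuousMultilinearMap 𝕜 (fun _ : κ => E) F) {M : ℝ} (hM : 0 ≤ M)
    (h : ∀ r : κ → ι, ‖T fun k => b (r k)‖ ≤ M) :
    ‖T‖ ≤ Fintype.card ι ^ Fintype.card κ * M := by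
  classical
  refine T.opNorm_le_bound (by positivity) fun v => ?_
  have expansion : T v = ∑ r : κ → ι, T fun k => b.repr (v k) (r k) • b (r k) := by
    rw [← T.map_sum fun k i => b.repr (v k) i • b i]
    simp_rw [b.sum_repr]
  have term_le (r : κ → ι) : ‖T fun k => b.repr (v k) (r k) • b (r k)‖ ≤ M * ∏ k, ‖v k‖ := by
    rw [T.map_smul_univ, norm_smul, norm_prod, mul_comm]
    gcongr with k
    · exact h r
    · exact (PiLp.norm_apply_le (b.repr (v k)) (r k)).trans_eq (b.repr.norm_map _)
  calc ‖T v‖ ≤ ∑ r : κ → ι, ‖T fun k => b.repr (v k) (r k) • b (r k)‖ := by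
        rw [expansion]; exact norm_sum_le _ _
    _ ≤ Fintype.card (κ → ι) • (M * ∏ k, ‖v k‖) :=
        Finset.sum_le_card_nsmul _ _ _ fun r _ => term_le r
    _ = Fintype.card ι ^ Fintype.card κ * M * ∏ k, ‖v k‖ := by simp [mul_assoc]

section PartialDerivatives

variable {d : ℕ} {f : EuclideanSpace ℝ (Fin d) → ℝ}

theorem contDiff_pderivE (i : Fin d) (hf : ContDiff ℝ ∞ f) : ContDiff ℝ ∞ (pderivE i f) :=
  (hf.fderiv_right (m := ∞) (by simp)).clm_apply contDiff_const

theorem contDiff_iterate_pderivE (i : Fin d) (n : ℕ) (hf : ContDiff ℝ ∞ f) :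
    ContDiff ℝ ∞ ((pderivE i)^[n] f) :=
  Function.Iterate.rec (ContDiff ℝ ∞) hf (fun _ => contDiff_pderivE i) n

theorem pderivE_comm (i j : Fin d) (hf : ContDiff ℝ 2 f) :
    pderivE i (pderivE j f) = pderivE j (pderivE i f) := by
  funext x
  have symmetric : IsSymmSndFDerivAt ℝ f x := hf.contDiffAt.isSymmSndFDerivAt (by simp)
  have differentiable : DifferentiableAt ℝ (fderiv ℝ f) x :=
    (hf.fderiv_right (m := 1) (by norm_num)).differentiable one_ne_zero x
  unfold pderivE
  rw [fderiv_clm_apply differentiable (differentiableAt_const _),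
    fderiv_clm_apply differentiable (differentiableAt_const _)]
  simpa using symmetric.eq _ _

theorem iterate_pderivE_comm (i j : Fin d) (m n : ℕ) (hf : ContDiff ℝ ∞ f) :
    (pderivE i)^[m] ((pderivE j)^[n] f) = (pderivE j)^[n] ((pderivE i)^[m] f) := by
  have two_le_infty : (2 : ℕ∞ω) ≤ (⊤ : ℕ∞) := WithTop.coe_le_coe.2 le_top
  have pderivE_iterate_comm (n : ℕ) {g : EuclideanSpace ℝ (Fin d) → ℝ} (hg : ContDiff ℝ ∞ g) :
      pderivE i ((pderivE j)^[n] g) = (pderivE j)^[n] (pderivE i g) := by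
    induction n with
    | zero => rfl
    | succ n ih =>
      rw [Function.iterate_succ_apply',
        pderivE_comm i j ((contDiff_iterate_pderivE j n hg).of_le two_le_infty), ih,
        Function.iterate_succ_apply']
  induction m with
  | zero => rfl
  | succ m ih =>
    rw [Function.iterate_succ_apply', ih, Function.iterate_succ_apply',
      pderivE_iterate_comm n (contDiff_iterate_pderivE i m hf)]

theorem contDiff_foldr_pderivE (l : List (Fin d)) (β : Fin d → ℕ) (hf : ContDiff ℝ ∞ f) :
    ContDiff ℝ ∞ (l.foldr (fun i g => (pderivE i)^[β i] g) f) := by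
  induction l with
  | nil => exact hf
  | cons i l ih => exact contDiff_iterate_pderivE i _ ih

theorem contDiff_mderiv (β : Fin d → ℕ) (hf : ContDiff ℝ ∞ f) : ContDiff ℝ ∞ (mderiv β f) :=
  contDiff_foldr_pderivE _ β hf

theorem iterate_pderivE_foldr_comm (i : Fin d) (n : ℕ) (l : List (Fin d)) (β : Fin d → ℕ)
    (hf : ContDiff ℝ ∞ f) :
    (pderivE i)^[n] (l.foldr (fun j g => (pderivE j)^[β j] g) f) =
      l.foldr (fun j g => (pderivE j)^[β j] g) ((pderivE i)^[n] f) := by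
  induction l with
  | nil => rfl
  | cons j l ih =>
    rw [List.foldr_cons, List.foldr_cons,
      iterate_pderivE_comm i j n (β j) (contDiff_foldr_pderivE l β hf), ih]

theorem mderiv_add (α β : Fin d → ℕ) (hf : ContDiff ℝ ∞ f) :
    mderiv (α + β) f = mderiv α (mderiv β f) := by
  unfold mderiv
  induction List.finRange d with
  | nil => rfl
  | cons i l ih =>
    rw [List.foldr_cons, ih, Pi.add_apply, Function.iterate_add_apply,
      iterate_pderivE_foldr_comm i (β i) l α (contDiff_foldr_pderivE l β hf)]
    rfl

theorem mderiv_zero (f : EuclideanSpace ℝ (Fin d) → ℝ) : mderiv 0 f = f :=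
  List.foldr_fixed _

theorem mderiv_single (i : Fin d) (f : EuclideanSpace ℝ (Fin d) → ℝ) :
    mderiv (Pi.single i 1) f = pderivE i f := by
  have iterate_single (j : Fin d) (g : EuclideanSpace ℝ (Fin d) → ℝ) :
      (pderivE j)^[(Pi.single i 1 : Fin d → ℕ) j] g = if j = i then pderivE j g else g := by
    split_ifs with h
    · rw [h, Pi.single_eq_same, Function.iterate_one]
    · rw [Pi.single_eq_of_ne h, Function.iterate_zero_apply]
  calc mderiv (Pi.single i 1) f
      = (List.finRange d).foldr (fun j g => if j = i then pderivE j g else g) f := by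
        simp only [mderiv, iterate_single]
    _ = ((List.finRange d).filter (· = i)).foldr pderivE f := by
        simp only [List.foldr_filter, decide_eq_true_eq]
    _ = pderivE i f := by
        rw [List.filter_eq, List.count_finRange, List.replicate_one, List.foldr_cons,
          List.foldr_nil]

theorem pderivE_mderiv (i : Fin d) (β : Fin d → ℕ) (hf : ContDiff ℝ ∞ f) :
    pderivE i (mderiv β f) = mderiv (Pi.single i 1 + β) f := by
  rw [mderiv_add _ _ hf, mderiv_single]

theorem iteratedFDeriv_apply_single {n : ℕ} (r : Fin n → Fin d) (hf : ContDiff ℝ ∞ f)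
    (x : EuclideanSpace ℝ (Fin d)) :
    iteratedFDeriv ℝ n f x (fun k => EuclideanSpace.single (r k) 1) =
      mderiv (∑ k, Pi.single (r k) 1) f x := by
  induction n generalizing x with
  | zero => simp [mderiv_zero]
  | succ n ih =>
    have tail_eq : (fun y => iteratedFDeriv ℝ n f y
        (Fin.tail fun k => EuclideanSpace.single (r k) 1)) =
        mderiv (∑ k : Fin n, Pi.single (r k.succ) 1) f :=
      funext fun y => ih (fun k => r k.succ) y
    have differentiable : DifferentiableAt ℝ (iteratedFDeriv ℝ n f) x :=
      hf.contDiffAt.differentiableAt_iteratedFDeriv (by exact_mod_cast ENat.natCast_lt_top n)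
    rw [differentiable.iteratedFDeriv_succ_apply_left', tail_eq, Fin.sum_univ_succ,
      ← pderivE_mderiv _ _ hf]
    rfl

theorem norm_iteratedFDeriv_le_of_abs_mderiv_le {n : ℕ} {x : EuclideanSpace ℝ (Fin d)} {M : ℝ}
    (hM : 0 ≤ M) (hf : ContDiff ℝ ∞ f)
    (h : ∀ β : Fin d → ℕ, ∑ i, β i = n → |mderiv β f x| ≤ M) :
    ‖iteratedFDeriv ℝ n f x‖ ≤ d ^ n * M := by
  have basis_le (r : Fin n → Fin d) :
      ‖iteratedFDeriv ℝ n f x fun k => EuclideanSpace.basisFun (Fin d) ℝ (r k)‖ ≤ M := by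
    have order_eq : ∑ i, (∑ k, Pi.single (r k) 1 : Fin d → ℕ) i = n := by
      simp only [Finset.sum_apply]
      rw [Finset.sum_comm]
      simp
    simp only [EuclideanSpace.basisFun_apply, iteratedFDeriv_apply_single r hf]
    exact h _ order_eq
  simpa using multilinear_opNorm_le_of_orthonormalBasis (EuclideanSpace.basisFun (Fin d) ℝ)
    (iteratedFDeriv ℝ n f x) hM basis_le

end PartialDerivatives

section Sobolev

theorem eLpNorm_two_sq {α ε : Type*} [MeasurableSpace α] [ENorm ε] (μ : Measure α) (f : α → ε) :
    eLpNorm f 2 μ ^ 2 = ∫⁻ a, ‖f a‖ₑ ^ 2 ∂μ := by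
  simpa using eLpNorm_nnreal_pow_eq_lintegral (p := 2) (f := f) (μ := μ) two_ne_zero

theorem enorm_integral_sq_le {α F : Type*} [MeasurableSpace α] {μ : Measure α}
    [IsProbabilityMeasure μ] [NormedAddCommGroup F] [NormedSpace ℝ F] {f : α → F}
    (hf : AEStronglyMeasurable f μ) : ‖∫ a, f a ∂μ‖ₑ ^ 2 ≤ ∫⁻ a, ‖f a‖ₑ ^ 2 ∂μ :=
  calc ‖∫ a, f a ∂μ‖ₑ ^ 2 ≤ eLpNorm f 1 μ ^ 2 := by
        rw [eLpNorm_one_eq_lintegral_enorm]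
        gcongr
        exact enorm_integral_le_lintegral_enorm f
    _ ≤ eLpNorm f 2 μ ^ 2 := by
        gcongr
        exact eLpNorm_le_eLpNorm_of_exponent_le one_le_two hf
    _ = ∫⁻ a, ‖f a‖ₑ ^ 2 ∂μ := eLpNorm_two_sq μ f

theorem enorm_add_sq_le {F : Type*} [SeminormedAddCommGroup F] (a b : F) :
    ‖a + b‖ₑ ^ 2 ≤ 2 * (‖a‖ₑ ^ 2 + ‖b‖ₑ ^ 2) := by
  have : ‖a + b‖₊ ^ 2 ≤ 2 * (‖a‖₊ ^ 2 + ‖b‖₊ ^ 2) :=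
    (pow_le_pow_left' (nnnorm_add_le a b) 2).trans add_sq_le
  simp only [enorm_eq_nnnorm]
  exact_mod_cast this

theorem enorm_sq_le_lintegral_add_deriv {F : Type*} [NormedAddCommGroup F] [NormedSpace ℝ F]
    [CompleteSpace F] {g g' : ℝ → F} (hg : ∀ t, HasDerivAt g (g' t) t) (hg' : Continuous g')
    (x : ℝ) : ‖g x‖ₑ ^ 2 ≤ 2 * ∫⁻ t, (‖g t‖ₑ ^ 2 + ‖g' t‖ₑ ^ 2) := by
  have hgc : Continuous g := continuous_iff_continuousAt.2 fun t => (hg t).continuousAt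
  -- The weight is `-1` at `x` and `0` at `x + 1`, so `w • g` changes by `g x` over `[x, x + 1]`.
  let w : ℝ → ℝ := fun t => t - (x + 1)
  have hw : Continuous w := by fun_prop
  let D : ℝ → F := fun t => w t • g' t + g t
  have hD : Continuous D := (hw.smul hg').add hgc
  have hderiv (t : ℝ) : HasDerivAt (fun t => w t • g t) (D t) t := by
    simpa using ((hasDerivAt_id t).sub_const (x + 1)).fun_smul (hg t)
  have g_eq : g x = ∫ t in Ioc x (x + 1), D t := by
    rw [← intervalIntegral.integral_of_le (by simp),
      intervalIntegral.integral_eq_sub_of_hasDerivAt (fun t _ => hderiv t)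
        (hD.intervalIntegrable _ _)]
    simp [w]
  have D_le : ∀ t ∈ Ioc x (x + 1), ‖D t‖ₑ ^ 2 ≤ 2 * (‖g t‖ₑ ^ 2 + ‖g' t‖ₑ ^ 2) := by
    intro t ht
    have hwt : ‖w t‖ₑ ≤ 1 := by
      rw [← enorm_one (G := ℝ), enorm_le_iff_norm_le, Real.norm_eq_abs, norm_one, abs_le]
      constructor <;> simp only [w] <;> linarith [ht.1, ht.2]
    rw [add_comm (‖g t‖ₑ ^ 2)]
    refine (enorm_add_sq_le _ _).trans ?_
    gcongr
    rw [enorm_smul]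
    exact mul_le_of_le_one_left' hwt
  have : IsProbabilityMeasure (volume.restrict (Ioc x (x + 1))) := ⟨by simp⟩
  calc ‖g x‖ₑ ^ 2 = ‖∫ t in Ioc x (x + 1), D t‖ₑ ^ 2 := by rw [← g_eq]
    _ ≤ ∫⁻ t in Ioc x (x + 1), ‖D t‖ₑ ^ 2 := enorm_integral_sq_le hD.aestronglyMeasurable
    _ ≤ ∫⁻ t in Ioc x (x + 1), 2 * (‖g t‖ₑ ^ 2 + ‖g' t‖ₑ ^ 2) :=
        setLIntegral_mono' measurableSet_Ioc D_le
    _ ≤ ∫⁻ t, 2 * (‖g t‖ₑ ^ 2 + ‖g' t‖ₑ ^ 2) := setLIntegral_le_lintegral _ _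
    _ = 2 * ∫⁻ t, (‖g t‖ₑ ^ 2 + ‖g' t‖ₑ ^ 2) := lintegral_const_mul' _ _ (by simp)

theorem lmarginal_le_mul_lmarginal_insert {ι : Type*} [DecidableEq ι] {X : ι → Type*}
    [∀ i, MeasurableSpace (X i)] {μ : ∀ i, Measure (X i)} [∀ i, SigmaFinite (μ i)]
    {u v : (∀ i, X i) → ℝ≥0∞} {c : ℝ≥0∞} (hc : c ≠ ⊤) (hv : Measurable v) {i : ι} {s : Finset ι}
    (hi : i ∉ s) (h : ∀ x, u x ≤ c * ∫⁻ t, v (Function.update x i t) ∂μ i) (x : ∀ i, X i) :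
    (∫⋯∫⁻_s, u ∂μ) x ≤ c * (∫⋯∫⁻_insert i s, v ∂μ) x := by
  rw [lmarginal_insert' v hv hi]
  refine (lmarginal_mono h x).trans_eq ?_
  exact lintegral_const_mul' _ _ hc

variable {d : ℕ} {g : EuclideanSpace ℝ (Fin d) → ℝ}

/-- The square `|g|²` read on `Fin d → ℝ` instead of `EuclideanSpace ℝ (Fin d)`: partial integrals
`∫⋯∫⁻_s` over some of the coordinates are only available on plain product spaces. -/
noncomputable def coordSq (g : EuclideanSpace ℝ (Fin d) → ℝ) (x : Fin d → ℝ) : ℝ≥0∞ :=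
  ‖g (WithLp.toLp 2 x)‖ₑ ^ 2

theorem measurable_coordSq (hg : Continuous g) : Measurable (coordSq g) :=
  (hg.comp (PiLp.continuous_toLp 2 _)).enorm.measurable.pow_const 2

theorem lintegral_coordSq (hg : Continuous g) : ∫⁻ x, coordSq g x = eLpNorm g 2 volume ^ 2 := by
  rw [eLpNorm_two_sq]
  exact (PiLp.volume_preserving_toLp (Fin d)).lintegral_comp (hg.enorm.measurable.pow_const 2)

theorem hasDerivAt_toLp_update (x : Fin d → ℝ) (i : Fin d) (t : ℝ) :
    HasDerivAt (fun t => WithLp.toLp 2 (Function.update x i t))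
      (EuclideanSpace.single i (1 : ℝ)) t :=
  (PiLp.hasFDerivAt_toLp (𝕜 := ℝ) 2 _).comp_hasDerivAt t (hasDerivAt_update x i t)

theorem coordSq_le_lintegral_update (i : Fin d) (hg : ContDiff ℝ 1 g) (x : Fin d → ℝ) :
    coordSq g x ≤ 2 * ∫⁻ t, (coordSq g (Function.update x i t) +
      coordSq (pderivE i g) (Function.update x i t)) := by
  have hline : Continuous fun t : ℝ => WithLp.toLp 2 (Function.update x i t) :=
    continuous_iff_continuousAt.2 fun t => (hasDerivAt_toLp_update x i t).continuousAt
  have hderiv (t : ℝ) : HasDerivAt (fun t => g (WithLp.toLp 2 (Function.update x i t)))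
      (pderivE i g (WithLp.toLp 2 (Function.update x i t))) t :=
    (hg.differentiable one_ne_zero _).hasFDerivAt.comp_hasDerivAt t (hasDerivAt_toLp_update x i t)
  have hcont : Continuous (pderivE i g) :=
    (hg.continuous_fderiv one_ne_zero).clm_apply continuous_const
  simpa [coordSq] using enorm_sq_le_lintegral_add_deriv hderiv (hcont.comp hline) (x i)

/-- The density `∑_{t ⊆ s} |∂^t g|²` of the mixed Sobolev norm of `g` in the coordinates `s`, where
`∂^t` differentiates once in each coordinate of `t`. -/
noncomputable def mixedSq (g : EuclideanSpace ℝ (Fin d) → ℝ) (s : Finset (Fin d))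
    (x : Fin d → ℝ) : ℝ≥0∞ :=
  ∑ t ∈ s.powerset, coordSq (mderiv (∑ i ∈ t, Pi.single i 1) g) x

theorem measurable_mixedSq (hg : ContDiff ℝ ∞ g) (s : Finset (Fin d)) : Measurable (mixedSq g s) :=
  Finset.measurable_fun_sum _ fun _ _ => measurable_coordSq (contDiff_mderiv _ hg).continuous

theorem mixedSq_insert {i : Fin d} {s : Finset (Fin d)} (hi : i ∉ s) (hg : ContDiff ℝ ∞ g)
    (x : Fin d → ℝ) : mixedSq g (insert i s) x =
      ∑ t ∈ s.powerset, (coordSq (mderiv (∑ j ∈ t, Pi.single j 1) g) x +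
        coordSq (pderivE i (mderiv (∑ j ∈ t, Pi.single j 1) g)) x) := by
  rw [mixedSq, Finset.sum_powerset_insert hi, Finset.sum_add_distrib]
  congr 1
  refine Finset.sum_congr rfl fun t ht => ?_
  rw [Finset.sum_insert fun hit => hi (Finset.mem_powerset.1 ht hit), pderivE_mderiv _ _ hg]

theorem mixedSq_le_lintegral_update {i : Fin d} {s : Finset (Fin d)} (hi : i ∉ s)
    (hg : ContDiff ℝ ∞ g) (x : Fin d → ℝ) :
    mixedSq g s x ≤ 2 * ∫⁻ t, mixedSq g (insert i s) (Function.update x i t) := by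
  simp only [mixedSq_insert hi hg]
  rw [lintegral_finsetSum _ fun t _ => ?_, Finset.mul_sum]
  · exact Finset.sum_le_sum fun t _ => coordSq_le_lintegral_update i
      ((contDiff_mderiv _ hg).of_le (by simp)) x
  · have hmt := contDiff_mderiv (∑ j ∈ t, Pi.single j 1) hg
    exact ((measurable_coordSq hmt.continuous).add
      (measurable_coordSq (contDiff_pderivE i hmt).continuous)).comp (measurable_update x)

theorem coordSq_le_lmarginal_mixedSq (hg : ContDiff ℝ ∞ g) (s : Finset (Fin d)) (x : Fin d → ℝ) :
    coordSq g x ≤ 2 ^ s.card * (∫⋯∫⁻_s, mixedSq g s ∂fun _ => volume) x := by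
  induction s using Finset.induction_on with
  | empty => simp [mixedSq, mderiv_zero]
  | insert i s hi ih =>
    calc coordSq g x ≤ 2 ^ s.card * (∫⋯∫⁻_s, mixedSq g s ∂fun _ => volume) x := ih
      _ ≤ 2 ^ s.card * (2 * (∫⋯∫⁻_insert i s, mixedSq g (insert i s) ∂fun _ => volume) x) := by
          gcongr
          exact lmarginal_le_mul_lmarginal_insert (by simp) (measurable_mixedSq hg _) hi
            (mixedSq_le_lintegral_update hi hg) x
      _ = 2 ^ (insert i s).card *
          (∫⋯∫⁻_insert i s, mixedSq g (insert i s) ∂fun _ => volume) x := by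
          rw [Finset.card_insert_of_notMem hi, pow_succ, mul_assoc]

theorem enorm_sq_le_sum_eLpNorm_mderiv (hg : ContDiff ℝ ∞ g) (x : EuclideanSpace ℝ (Fin d)) :
    ‖g x‖ₑ ^ 2 ≤
      2 ^ d * ∑ s : Finset (Fin d), eLpNorm (mderiv (∑ i ∈ s, Pi.single i 1) g) 2 volume ^ 2 := by
  have h := coordSq_le_lmarginal_mixedSq hg Finset.univ (WithLp.ofLp x)
  rw [lmarginal_univ, ← volume_pi] at h
  simp only [mixedSq] at h
  rw [lintegral_finsetSum _ fun s _ => measurable_coordSq (contDiff_mderiv _ hg).continuous] at h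
  simpa only [coordSq, WithLp.toLp_ofLp, Finset.card_univ, Fintype.card_fin, Finset.powerset_univ,
    ← lintegral_coordSq (contDiff_mderiv _ hg).continuous] using h

theorem abs_le_of_eLpNorm_mderiv_le {M : ℝ} (hM : 0 ≤ M) (hg : ContDiff ℝ ∞ g)
    (h : ∀ s : Finset (Fin d),
      eLpNorm (mderiv (∑ i ∈ s, Pi.single i 1) g) 2 volume ≤ ENNReal.ofReal M)
    (x : EuclideanSpace ℝ (Fin d)) : |g x| ≤ 2 ^ d * M := by
  have sq_le : ‖g x‖ₑ ^ 2 ≤ ENNReal.ofReal (2 ^ d * M) ^ 2 :=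
    calc ‖g x‖ₑ ^ 2 ≤ 2 ^ d * ∑ s : Finset (Fin d),
          eLpNorm (mderiv (∑ i ∈ s, Pi.single i 1) g) 2 volume ^ 2 :=
          enorm_sq_le_sum_eLpNorm_mderiv hg x
      _ ≤ 2 ^ d * ∑ _s : Finset (Fin d), ENNReal.ofReal M ^ 2 := by
          gcongr with s
          exact h s
      _ = ENNReal.ofReal (2 ^ d * M) ^ 2 := by
          rw [Finset.sum_const, Finset.card_univ, Fintype.card_finset, Fintype.card_fin,
            ENNReal.ofReal_mul (by positivity), ENNReal.ofReal_pow zero_le_two,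
            ENNReal.ofReal_ofNat, nsmul_eq_mul]
          push_cast
          ring
  have := (ENNReal.pow_le_pow_left_iff two_ne_zero).1 sq_le
  rwa [Real.enorm_eq_ofReal_abs, ENNReal.ofReal_le_ofReal_iff (by positivity)] at this

end Sobolev

section MultiIndices

variable {ι : Type*}

theorem sum_single_one_le_one [DecidableEq ι] (s : Finset ι) :
    ∑ i ∈ s, Pi.single i 1 ≤ (1 : ι → ℕ) := by
  intro i
  simp only [Finset.sum_apply, Pi.single_apply, Finset.sum_ite_eq, Pi.one_apply]
  split_ifs <;> simp

theorem factorial_succ_le_two_pow_mul_factorial (n : ℕ) : (n + 1)! ≤ 2 ^ n * n ! :=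
  Nat.mul_le_mul_right _ Nat.lt_two_pow_self

variable [Fintype ι] {γ : ι → ℕ}

theorem prod_factorial_add_le (hγ : γ ≤ 1) (β : ι → ℕ) :
    ∏ i, ((γ + β) i)! ≤ 2 ^ (∑ i, β i) * ∏ i, (β i)! :=
  calc ∏ i, ((γ + β) i)! ≤ ∏ i, 2 ^ β i * (β i)! := by
        gcongr with i
        have index_le : (γ + β) i ≤ β i + 1 :=
          (add_comm (γ i) (β i)).trans_le (Nat.add_le_add_left (hγ i) _)
        exact (Nat.factorial_le index_le).trans (factorial_succ_le_two_pow_mul_factorial _)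
    _ = 2 ^ (∑ i, β i) * ∏ i, (β i)! := by
        rw [Finset.prod_mul_distrib, Finset.prod_pow_eq_pow_sum]

theorem pow_sum_add_le {C : ℝ} (hC : 0 ≤ C) (hγ : γ ≤ 1) (β : ι → ℕ) :
    C ^ (∑ i, (γ + β) i) ≤ max 1 C ^ Fintype.card ι * C ^ (∑ i, β i) := by
  have order_le : ∑ i, γ i ≤ Fintype.card ι :=
    (Finset.sum_le_sum fun i _ => hγ i).trans_eq (by simp)
  simp only [Pi.add_apply, Finset.sum_add_distrib, pow_add]
  gcongr
  calc C ^ ∑ i, γ i ≤ max 1 C ^ ∑ i, γ i := by gcongr; exact le_max_right _ _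
    _ ≤ max 1 C ^ Fintype.card ι := pow_le_pow_right₀ (le_max_left _ _) order_le

theorem prod_factorial_le_factorial_sum (β : ι → ℕ) : ∏ i, (β i)! ≤ (∑ i, β i)! :=
  Nat.le_of_dvd (Nat.factorial_pos _) (Nat.prod_factorial_dvd_factorial_sum _ _)

end MultiIndices

theorem abs_mderiv_le_of_eLpNorm_mderiv_le {d : ℕ} {f : EuclideanSpace ℝ (Fin d) → ℝ} {C₁ C₂ : ℝ}
    (hC₁ : 0 ≤ C₁) (hC₂ : 0 ≤ C₂) (hf : ContDiff ℝ ∞ f)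
    (hbound : ∀ β : Fin d → ℕ, eLpNorm (mderiv β f) 2 volume ≤
      ENNReal.ofReal (C₁ * C₂ ^ (∑ i, β i) * (∏ i, (β i)! : ℕ)))
    (β : Fin d → ℕ) (x : EuclideanSpace ℝ (Fin d)) :
    |mderiv β f x| ≤ 2 ^ d * (C₁ * max 1 C₂ ^ d) * (2 * C₂) ^ (∑ i, β i) * (∏ i, (β i)! : ℕ) := by
  have shifted_bound_le {γ : Fin d → ℕ} (hγ : γ ≤ 1) :
      C₁ * C₂ ^ (∑ i, (γ + β) i) * (∏ i, ((γ + β) i)! : ℕ) ≤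
        C₁ * max 1 C₂ ^ d * (2 * C₂) ^ (∑ i, β i) * (∏ i, (β i)! : ℕ) :=
    calc C₁ * C₂ ^ (∑ i, (γ + β) i) * (∏ i, ((γ + β) i)! : ℕ)
        ≤ C₁ * (max 1 C₂ ^ d * C₂ ^ (∑ i, β i)) * (2 ^ (∑ i, β i) * ∏ i, (β i)! : ℕ) := by
          gcongr
          · simpa only [Fintype.card_fin] using pow_sum_add_le hC₂ hγ β
          · exact prod_factorial_add_le hγ β
      _ = C₁ * max 1 C₂ ^ d * (2 * C₂) ^ (∑ i, β i) * (∏ i, (β i)! : ℕ) := by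
          push_cast
          rw [mul_pow]
          ring
  have eLpNorm_le (s : Finset (Fin d)) :
      eLpNorm (mderiv (∑ i ∈ s, Pi.single i 1) (mderiv β f)) 2 volume ≤
        ENNReal.ofReal (C₁ * max 1 C₂ ^ d * (2 * C₂) ^ (∑ i, β i) * (∏ i, (β i)! : ℕ)) := by
    rw [← mderiv_add _ _ hf]
    exact (hbound _).trans (ENNReal.ofReal_le_ofReal (shifted_bound_le (sum_single_one_le_one s)))
  simpa only [mul_assoc] using
    abs_le_of_eLpNorm_mderiv_le (by positivity) (contDiff_mderiv β hf) eLpNorm_le x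

theorem norm_iteratedFDeriv_le_of_eLpNorm_mderiv_le {d : ℕ} {f : EuclideanSpace ℝ (Fin d) → ℝ}
    {C₁ C₂ : ℝ} (hC₁ : 0 ≤ C₁) (hC₂ : 0 ≤ C₂) (hf : ContDiff ℝ ∞ f)
    (hbound : ∀ β : Fin d → ℕ, eLpNorm (mderiv β f) 2 volume ≤
      ENNReal.ofReal (C₁ * C₂ ^ (∑ i, β i) * (∏ i, (β i)! : ℕ)))
    (n : ℕ) (x : EuclideanSpace ℝ (Fin d)) :
    ‖iteratedFDeriv ℝ n f x‖ ≤ 2 ^ d * (C₁ * max 1 C₂ ^ d) * (d * (2 * C₂)) ^ n * n ! := by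
  have abs_mderiv_le (β : Fin d → ℕ) (hβ : ∑ i, β i = n) :
      |mderiv β f x| ≤ 2 ^ d * (C₁ * max 1 C₂ ^ d) * (2 * C₂) ^ n * n ! := by
    refine (abs_mderiv_le_of_eLpNorm_mderiv_le hC₁ hC₂ hf hbound β x).trans ?_
    rw [← hβ]
    gcongr
    exact prod_factorial_le_factorial_sum β
  calc ‖iteratedFDeriv ℝ n f x‖ ≤ d ^ n * (2 ^ d * (C₁ * max 1 C₂ ^ d) * (2 * C₂) ^ n * n !) :=
        norm_iteratedFDeriv_le_of_abs_mderiv_le (by positivity) hf abs_mderiv_le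
    _ = 2 ^ d * (C₁ * max 1 C₂ ^ d) * (d * (2 * C₂)) ^ n * n ! := by rw [mul_pow]; ring

/-- Lemma A.1 (a smooth function with L² derivative bounds of analytic type is
real-analytic on `ℝ^d`). -/
theorem analyticity_lemma
    (d : ℕ) (hd : 1 ≤ d)
    (f : EuclideanSpace ℝ (Fin d) → ℝ) (hf : ContDiff ℝ (⊤ : ℕ∞) f)
    (C₁ C₂ : ℝ) (hC₁ : 0 < C₁) (hC₂ : 0 < C₂)
    (hbound : ∀ β : Fin d → ℕ,
      eLpNorm (mderiv β f) 2 volume ≤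
        ENNReal.ofReal (C₁ * C₂ ^ (∑ i, β i) * ((∏ i, (β i).factorial : ℕ) : ℝ))) :
    AnalyticOnNhd ℝ f Set.univ := by
  have hd₀ : (0 : ℝ) < d := by exact_mod_cast hd
  intro x _
  exact analyticAt_of_norm_iteratedFDeriv_le (mul_pos hd₀ (mul_pos two_pos hC₂))
    (.of_forall fun _ => hf.contDiffAt)
    (.of_forall fun y n => norm_iteratedFDeriv_le_of_eLpNorm_mderiv_le hC₁.le hC₂.le hf hbound n y)
end

section
/- Let D ≥ 1/2 and s ∈ [0,1). Then Σ_{m=0}^∞ D^m/(m!)^{1−s} ≤ 2 · (2D)^{3·(2D)^{1/(1−s)}}. -/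
/-!
With `x = 2 * D`, `a = 1 - s` and `y = x ^ (1 / a)`, the `m`-th term is
`2⁻¹ ^ m * (y ^ m / m!) ^ a`. The bound `(m / e) ^ m ≤ m!` gives `y ^ m / m! ≤ 1` as soon
as `m ≥ e * y`, and for smaller `m` the quotient is at most `y ^ (e * y)`. So the `m`-th term is at
most `2⁻¹ ^ m * x ^ (e * y)`, and the geometric series gives the factor `2`.
-/

theorem div_exp_one_pow_le_factorial (m : ℕ) : (m / Real.exp 1) ^ m ≤ (m.factorial : ℝ) := by
  have h : (m : ℝ) ^ m / m.factorial ≤ Real.exp m :=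
    Real.pow_div_factorial_le_exp m m.cast_nonneg m
  rw [div_pow, Real.exp_one_pow]
  exact (div_le_comm₀ (by positivity) (by positivity)).mp h

theorem pow_div_factorial_le_rpow {y : ℝ} (hy : 1 ≤ y) (m : ℕ) :
    y ^ m / m.factorial ≤ y ^ (Real.exp 1 * y) := by
  rcases le_total (m : ℝ) (Real.exp 1 * y) with hm | hm
  · calc y ^ m / m.factorial ≤ y ^ m :=
          div_le_self (by positivity) (mod_cast m.factorial_pos)
      _ = y ^ (m : ℝ) := (Real.rpow_natCast y m).symm
      _ ≤ y ^ (Real.exp 1 * y) := Real.rpow_le_rpow_of_exponent_le hy hm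
  · have hym : y ≤ m / Real.exp 1 := (le_div_iff₀' (Real.exp_pos 1)).mpr hm
    calc y ^ m / m.factorial ≤ 1 :=
          div_le_one_of_le₀ ((pow_le_pow_left₀ (by positivity) hym m).trans
            (div_exp_one_pow_le_factorial m)) (by positivity)
      _ ≤ y ^ (Real.exp 1 * y) := Real.one_le_rpow hy (by positivity)

section

variable {a x : ℝ}

theorem pow_div_factorial_rpow_le_rpow (ha : 0 < a) (hx : 1 ≤ x) (m : ℕ) :
    x ^ m / (m.factorial : ℝ) ^ a ≤ x ^ (Real.exp 1 * x ^ (1 / a)) := by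
  have hx0 : 0 ≤ x := zero_le_one.trans hx
  set y := x ^ (1 / a) with hy
  have hy1 : 1 ≤ y := Real.one_le_rpow hx (by positivity)
  have hy0 : 0 ≤ y := zero_le_one.trans hy1
  have hya : y ^ a = x := by rw [hy, one_div, Real.rpow_inv_rpow hx0 ha.ne']
  calc x ^ m / (m.factorial : ℝ) ^ a = (y ^ m / m.factorial) ^ a := by
        rw [Real.div_rpow (by positivity) (by positivity), ← Real.rpow_pow_comm hy0, hya]
    _ ≤ (y ^ (Real.exp 1 * y)) ^ a :=
        Real.rpow_le_rpow (by positivity) (pow_div_factorial_le_rpow hy1 m) ha.le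
    _ = x ^ (Real.exp 1 * y) := by
        rw [← Real.rpow_mul hy0, mul_comm, Real.rpow_mul hy0, hya]

theorem pow_div_factorial_rpow_le_geometric {D : ℝ} (ha : 0 < a) (hx : 1 ≤ x) (hD : 0 ≤ D)
    (m : ℕ) :
    D ^ m / (m.factorial : ℝ) ^ a ≤ x ^ (Real.exp 1 * x ^ (1 / a)) * (D / x) ^ m := by
  have hx0 : 0 < x := zero_lt_one.trans_le hx
  calc D ^ m / (m.factorial : ℝ) ^ a = x ^ m / (m.factorial : ℝ) ^ a * (D / x) ^ m := by
        rw [mul_comm, div_pow, div_mul_div_cancel₀ (pow_pos hx0 m).ne']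
    _ ≤ x ^ (Real.exp 1 * x ^ (1 / a)) * (D / x) ^ m :=
        mul_le_mul_of_nonneg_right (pow_div_factorial_rpow_le_rpow ha hx m) (by positivity)

theorem summable_pow_div_factorial_rpow (ha : 0 < a) (D : ℝ) :
    Summable fun m : ℕ ↦ D ^ m / (m.factorial : ℝ) ^ a := by
  have hx : 1 ≤ |D| + 1 := le_add_of_nonneg_left (abs_nonneg D)
  have hratio : |D| / (|D| + 1) < 1 := (div_lt_one (by positivity)).mpr (lt_add_one |D|)
  refine .of_norm_bounded
    ((summable_geometric_of_lt_one (by positivity) hratio).mul_left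
      ((|D| + 1) ^ (Real.exp 1 * (|D| + 1) ^ (1 / a)))) fun m ↦ ?_
  rw [norm_div, norm_pow, Real.norm_eq_abs, Real.norm_of_nonneg (by positivity)]
  exact pow_div_factorial_rpow_le_geometric ha hx (abs_nonneg D) m

theorem tsum_pow_div_factorial_rpow_le {D : ℝ} (ha : 0 < a) (hx : 1 ≤ x) (hD : 0 ≤ D)
    (hDx : D < x) :
    ∑' m : ℕ, D ^ m / (m.factorial : ℝ) ^ a ≤
      x ^ (Real.exp 1 * x ^ (1 / a)) * (1 - D / x)⁻¹ := by
  have hx0 : 0 < x := zero_lt_one.trans_le hx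
  have hratio : D / x < 1 := (div_lt_one hx0).mpr hDx
  exact hasSum_le (pow_div_factorial_rpow_le_geometric ha hx hD)
    (summable_pow_div_factorial_rpow ha D).hasSum
    ((hasSum_geometric_of_lt_one (by positivity) hratio).mul_left _)

end

theorem series_bound_general (D s : ℝ) (hD : 1 / 2 ≤ D) (hs1 : s < 1) :
    ∑' m : ℕ, D ^ m / (m.factorial : ℝ) ^ (1 - s) ≤
      2 * (2 * D) ^ (3 * (2 * D) ^ (1 / (1 - s))) := by
  have hD0 : 0 < D := one_half_pos.trans_le hD
  have hx : 1 ≤ 2 * D := by linarith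
  have hratio : (1 - D / (2 * D))⁻¹ = 2 := by
    field_simp
    norm_num
  calc ∑' m : ℕ, D ^ m / (m.factorial : ℝ) ^ (1 - s)
      ≤ (2 * D) ^ (Real.exp 1 * (2 * D) ^ (1 / (1 - s))) * (1 - D / (2 * D))⁻¹ :=
        tsum_pow_div_factorial_rpow_le (sub_pos.mpr hs1) hx hD0.le (by linarith)
    _ = 2 * (2 * D) ^ (Real.exp 1 * (2 * D) ^ (1 / (1 - s))) := by rw [hratio, mul_comm]
    _ ≤ 2 * (2 * D) ^ (3 * (2 * D) ^ (1 / (1 - s))) := by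
        gcongr
        exact Real.exp_one_lt_three.le

/-- Lemma A.2 (a bound on the series `Σ_m D^m/(m!)^{1-s}`). -/
theorem series_bound (D s : ℝ) (hD : 1 / 2 ≤ D) (hs0 : 0 ≤ s) (hs1 : s < 1) :
    ∑' m : ℕ, D ^ m / (m.factorial : ℝ) ^ (1 - s) ≤
      2 * (2 * D) ^ (3 * (2 * D) ^ (1 / (1 - s))) :=
  series_bound_general D s hD hs1
end

section
/- Let s ∈ [0,1), τ ∈ (0,1], and let m be a positive integer with m ≥ 3/τ^{1/(1−s)}. Then (m!)^s ≤ τ^m · m!. -/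
/-!
Put `t = τ ^ (1 / (1 - s))`, so that `τ = t ^ (1 - s)`, and cancel `m!`: the claim becomes the
`(1 - s)`-th power of `(m!)⁻¹ ≤ t ^ m`. Since `m ^ m / m!` is one term of the exponential series
at `m`, `(m!)⁻¹ ≤ (e / m) ^ m`, so `e / m ≤ t` suffices.
-/

theorem inv_factorial_le_exp_one_div_pow (n : ℕ) :
    (n.factorial : ℝ)⁻¹ ≤ (Real.exp 1 / n) ^ n := by
  have self_pow_pos : (0 : ℝ) < (n : ℝ) ^ n := mod_cast Nat.pow_self_pos
  rw [div_pow, Real.exp_one_pow, le_div_iff₀ self_pow_pos, inv_mul_eq_div]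
  exact Real.pow_div_factorial_le_exp n n.cast_nonneg n

theorem rpow_le_rpow_one_sub_mul_of_inv_le {x b s : ℝ} (hx : 0 < x) (hs : s ≤ 1)
    (hb : x⁻¹ ≤ b) : x ^ s ≤ b ^ (1 - s) * x :=
  calc x ^ s = x⁻¹ ^ (1 - s) * x := by
        rw [Real.inv_rpow hx.le, ← Real.rpow_neg hx.le, neg_sub, Real.rpow_sub_one hx.ne',
          div_mul_cancel₀ _ hx.ne']
    _ ≤ b ^ (1 - s) * x := by
        have : 0 ≤ 1 - s := sub_nonneg.mpr hs
        gcongr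

theorem factorial_power_bound_general {s τ : ℝ} (hs : s < 1) (hτ : 0 < τ) {m : ℕ}
    (hm : Real.exp 1 / τ ^ (1 / (1 - s)) ≤ m) :
    (m.factorial : ℝ) ^ s ≤ τ ^ m * m.factorial := by
  set t := τ ^ (1 / (1 - s)) with t_def
  have t_pos : 0 < t := Real.rpow_pos_of_pos hτ _
  have t_rpow : t ^ (1 - s) = τ := by
    rw [t_def, one_div, Real.rpow_inv_rpow hτ.le (sub_pos.mpr hs).ne']
  have m_pos : (0 : ℝ) < m := (div_pos (Real.exp_pos 1) t_pos).trans_le hm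
  have inv_factorial_le : (m.factorial : ℝ)⁻¹ ≤ t ^ m :=
    (inv_factorial_le_exp_one_div_pow m).trans
      (pow_le_pow_left₀ (by positivity) ((div_le_comm₀ t_pos m_pos).mp hm) m)
  calc (m.factorial : ℝ) ^ s ≤ (t ^ m) ^ (1 - s) * m.factorial :=
        rpow_le_rpow_one_sub_mul_of_inv_le (mod_cast m.factorial_pos) hs.le inv_factorial_le
    _ = τ ^ m * m.factorial := by rw [← Real.rpow_pow_comm t_pos.le, t_rpow]

/-- The elementary factorial estimate `(m!)^s ≤ τ^m · m!` for
`m ≥ 3/τ^{1/(1-s)}`, used in the proof of Lemma A.2. -/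
theorem factorial_power_bound
    (s τ : ℝ) (hs0 : 0 ≤ s) (hs1 : s < 1) (hτ0 : 0 < τ) (hτ1 : τ ≤ 1)
    (m : ℕ) (hm : 0 < m) (hm3 : 3 / τ ^ (1 / (1 - s)) ≤ (m : ℝ)) :
    (m.factorial : ℝ) ^ s ≤ τ ^ m * (m.factorial : ℝ) :=
  factorial_power_bound_general hs1 hτ0 <|
    (div_le_div_of_nonneg_right Real.exp_one_lt_three.le (by positivity)).trans hm3
end
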